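/- Let ψ_n : D^n → [0,1] be any measurable (possibly randomized) test based on the full data (X_i, Y_i(1), Y_i(0), T_i)_{i=1}^n, which are i.i.d. with law P under P. If sup_{P ∈ P_SI} E_P[ψ_n] ≤ α for some α ∈ (0,1), then sup_{Q ∈ E} E_Q[ψ_n] ≤ α. -/

import Mathlib

/-!
STATEMENT 0 (no-free-lunch for conditional independence testing, finite sample):
If a (possibly randomized) test `ψ : D^n → [0,1]` on the full data
`(X, Y(1), Y(0), T)` has level `α` over the strong-ignorability class `P_SI`,
then it has level `α` over the whole class `E`.
-/

open MeasureTheory ProbabilityTheory Filter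

noncomputable section

/-- The full-data sample space `D = ℝ^p × ℝ² × {0,1}`. -/
abbrev FullData (p : ℕ) : Type := (Fin p → ℝ) × ℝ × ℝ × Bool

/-- Covariate coordinate. -/
def Xc {p : ℕ} (ω : FullData p) : Fin p → ℝ := ω.1

/-- Treated potential outcome coordinate `Y(1)`. -/
def Y1c {p : ℕ} (ω : FullData p) : ℝ := ω.2.1

/-- Control potential outcome coordinate `Y(0)`. -/
def Y0c {p : ℕ} (ω : FullData p) : ℝ := ω.2.2.1

/-- Treatment coordinate `T`. -/
def Tc {p : ℕ} (ω : FullData p) : Bool := ω.2.2.2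

lemma measurable_Xc {p : ℕ} : Measurable (Xc (p := p)) := measurable_fst

/-- The σ-algebra generated by the covariates `X`. -/
def mX (p : ℕ) : MeasurableSpace (FullData p) :=
  MeasurableSpace.comap Xc inferInstance

lemma mX_le (p : ℕ) : mX p ≤ (inferInstance : MeasurableSpace (FullData p)) := measurable_Xc.comap_le

/-- The class `E`: distributions of `(X, Y(1), Y(0), T)` such that at least one coordinate
of `X` has a law absolutely continuous w.r.t. Lebesgue measure, and the laws of `Y(1)` and
`Y(0)` are atomless (continuous). -/
def memE {p : ℕ} (P : ProbabilityMeasure (FullData p)) : Prop :=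
  (∃ j : Fin p,
    ((P : Measure (FullData p)).map (fun ω => Xc ω j)).AbsolutelyContinuous
      (volume : Measure ℝ)) ∧
  (∀ y : ℝ, ((P : Measure (FullData p)).map Y1c) {y} = 0) ∧
  (∀ y : ℝ, ((P : Measure (FullData p)).map Y0c) {y} = 0)

/-- The strong-ignorability class `P_SI ⊆ E`: `(Y(1), Y(0)) ⫫ T | X`. -/
def memPSI {p : ℕ} (P : ProbabilityMeasure (FullData p)) : Prop :=
  memE P ∧
    CondIndepFun (mX p) (mX_le p) (fun ω => (Y1c ω, Y0c ω)) Tc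
      (P : Measure (FullData p))

/-- Expected value `E_P[ψ_n]` of a test `ψ_n : D^n → [0,1]` when the `n` data points are
i.i.d. with law `P`, i.e. the integral of `ψ_n` against the `n`-fold product measure. -/
def testExp {p : ℕ} (n : ℕ) (ψ : (Fin n → FullData p) → ℝ)
    (P : ProbabilityMeasure (FullData p)) : ℝ :=
  ∫ x, ψ x ∂(Measure.pi fun _ : Fin n => (P : Measure (FullData p)))

open Function Measure
open scoped ENNReal

/-!
Cut the covariate space into finitely many cells. In each cell `k` draw, independently, a value
`c k` from the conditional law of `T` given the cell, and condition `Q` on `T = c k` in every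
cell `k`. The resulting law is absolutely continuous with respect to `Q` and makes `T` a function
of `X`, so it is strongly ignorable and the test has level `α` under it. Averaged over `c`, its
`n`-fold product agrees with that of `Q` on the samples whose points lie in distinct cells,
because such a sample reads each `c k` at most once. The law of `X` has no atoms, so as the cells
are refined these samples exhaust almost every sample, and the level bound passes to `Q`.
-/

section DiagonalNull

theorem measurableEq_of_countablySeparated (α : Type*) [MeasurableSpace α]
    [MeasurableSpace.CountablySeparated α] : MeasurableEq α := by
  obtain ⟨f, hf, hinj⟩ := MeasurableSpace.measurable_injection_nat_bool_of_countablySeparated α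
  refine ⟨?_⟩
  convert measurableSet_eq_fun (hf.comp measurable_fst) (hf.comp measurable_snd) using 1
  ext ⟨a, b⟩
  exact hinj.eq_iff.symm

theorem ae_prod_ne {α : Type*} [MeasurableSpace α] [MeasurableEq α] (μ ν : Measure α)
    [SFinite ν] [NullSingletonClass ν] : ∀ᵐ z ∂μ.prod ν, z.1 ≠ z.2 := by
  refine (ae_prod_iff_ae_ae measurableSet_diagonal.compl).2 (.of_forall fun a => ?_)
  filter_upwards [compl_mem_ae_iff.2 (measure_singleton (μ := ν) a)] with b hb
  exact Ne.symm hb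

end DiagonalNull

section ProductMeasure

variable {ι : Type*} [Fintype ι]

theorem lintegral_pi_prod_eval_of_injective {κ : Type*} [Fintype κ] {α : κ → Type*}
    [∀ k, MeasurableSpace (α k)] (μ : ∀ k, Measure (α k)) [∀ k, IsProbabilityMeasure (μ k)]
    {k : ι → κ} (hk : Injective k) {f : ∀ i, α (k i) → ℝ≥0∞} (hf : ∀ i, Measurable (f i)) :
    ∫⁻ x, ∏ i, f i (x (k i)) ∂Measure.pi μ = ∏ i, ∫⁻ y, f i y ∂μ (k i) := by
  have hindep : iIndepFun (fun i (x : ∀ k, α k) => f i (x (k i))) (Measure.pi μ) :=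
    ((iIndepFun_pi (X := fun _ y => y) fun _ => aemeasurable_id).precomp hk).comp f hf
  rw [lintegral_prod_eq_prod_lintegral_of_indepFun _ _ hindep fun i =>
    (hf i).comp (measurable_pi_apply (k i))]
  exact Finset.prod_congr rfl fun i _ => (measurePreserving_eval μ (k i)).lintegral_comp (hf i)

theorem pi_withDensity {α : ι → Type*} [∀ i, MeasurableSpace (α i)] (μ : ∀ i, Measure (α i))
    [∀ i, IsProbabilityMeasure (μ i)] {f : ∀ i, α i → ℝ≥0∞} (hf : ∀ i, Measurable (f i))
    [∀ i, SigmaFinite ((μ i).withDensity (f i))] :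
    Measure.pi (fun i => (μ i).withDensity (f i)) =
      (Measure.pi μ).withDensity fun x => ∏ i, f i (x i) := by
  refine pi_eq fun s hs => ?_
  have hprod (x : ∀ i, α i) : (Set.univ.pi s).indicator (fun x => ∏ i, f i (x i)) x =
      ∏ i, (s i).indicator (f i) (x i) := by
    classical
    simp only [Set.indicator_apply, Set.mem_univ_pi, Finset.prod_ite_zero, Finset.mem_univ,
      true_imp_iff]
  rw [withDensity_apply _ (.univ_pi hs), ← lintegral_indicator (.univ_pi hs)]
  simp_rw [hprod, withDensity_apply _ (hs _), ← lintegral_indicator (hs _)]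
  exact lintegral_pi_prod_eval_of_injective μ injective_id fun i => (hf i).indicator (hs i)

theorem ae_injective_pi {α : Type*} [MeasurableSpace α] [MeasurableEq α] (μ : Measure α)
    [IsProbabilityMeasure μ] [NullSingletonClass μ] :
    ∀ᵐ x ∂Measure.pi fun _ : ι => μ, Injective x := by
  have hne (i j : ι) (hij : i ≠ j) : ∀ᵐ x ∂Measure.pi fun _ : ι => μ, x i ≠ x j := by
    have hindep : IndepFun (eval i) (eval j) (Measure.pi fun _ : ι => μ) :=
      (iIndepFun_pi (X := fun (_ : ι) (y : α) => y) fun _ => aemeasurable_id).indepFun hij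
    have hlaw := hindep.map_prod_eq_prod_map_map (measurable_pi_apply i).aemeasurable
      (measurable_pi_apply j).aemeasurable
    rw [(measurePreserving_eval _ i).map_eq, (measurePreserving_eval _ j).map_eq] at hlaw
    have hae := ae_prod_ne μ μ
    rw [← hlaw] at hae
    exact ae_of_ae_map ((measurable_pi_apply i).prodMk (measurable_pi_apply j)).aemeasurable hae
  have hall : ∀ᵐ x ∂Measure.pi fun _ : ι => μ, ∀ i j, i ≠ j → x i ≠ x j := by
    simpa only [ae_all_iff] using hne
  filter_upwards [hall] with x hx i j
  exact not_imp_not.1 (hx i j)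

theorem ae_injective_comp_pi {Ω α : Type*} [MeasurableSpace Ω] [MeasurableSpace α]
    [MeasurableEq α] (Q : Measure Ω) [IsProbabilityMeasure Q] {X : Ω → α} (hX : Measurable X)
    [NullSingletonClass (Q.map X)] :
    ∀ᵐ x ∂Measure.pi fun _ : ι => Q, Injective fun i => X (x i) := by
  have : IsProbabilityMeasure (Q.map X) := isProbabilityMeasure_map hX.aemeasurable
  have hae := ae_injective_pi (ι := ι) (Q.map X)
  rw [← pi_map_pi fun _ => hX.aemeasurable] at hae
  exact ae_of_ae_map (measurable_pi_lambda _ fun i => hX.comp (measurable_pi_apply i)).aemeasurable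
    hae

end ProductMeasure

section DiracDensity

variable {β : Type*} [MeasurableSpace β]

/-- The density of the Dirac mass at `s` with respect to `μ`, for an atom `s` of `μ`. -/
def diracDensity (μ : Measure β) (s : β) : β → ℝ≥0∞ := ({s} : Set β).indicator fun t => (μ {t})⁻¹

theorem diracDensity_comm (μ : Measure β) (s t : β) :
    diracDensity μ s t = diracDensity μ t s := by
  classical
  rcases eq_or_ne s t with rfl | h
  · rfl
  · simp [diracDensity, h, h.symm]

theorem lintegral_diracDensity [MeasurableSingletonClass β] (μ : Measure β) [IsFiniteMeasure μ]
    {s : β} (hs : μ {s} ≠ 0) : ∫⁻ t, diracDensity μ s t ∂μ = 1 := by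
  rw [diracDensity, lintegral_indicator (measurableSet_singleton s), lintegral_singleton,
    ENNReal.inv_mul_cancel hs (measure_ne_top μ _)]

theorem lintegral_pi_prod_diracDensity [Countable β] [MeasurableSingletonClass β]
    {ι K : Type*} [Fintype ι] [Fintype K]
    (q : K → Measure β) [∀ k, IsProbabilityMeasure (q k)] {k : ι → K} (hk : Injective k)
    {b : ι → β} (hb : ∀ i, q (k i) {b i} ≠ 0) :
    ∫⁻ c, ∏ i, diracDensity (q (k i)) (c (k i)) (b i) ∂Measure.pi q = 1 := by
  simp_rw [diracDensity_comm _ _ (b _)]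
  rw [lintegral_pi_prod_eval_of_injective q hk fun i => .of_discrete]
  exact Finset.prod_eq_one fun i _ => lintegral_diracDensity _ (hb i)

end DiracDensity

section SelectionLaw

variable {Ω K β : Type*} [MeasurableSpace Ω] [Finite K] [MeasurableSpace K]
  [MeasurableSingletonClass K] [MeasurableSpace β] [Countable β] [MeasurableSingletonClass β]
  [Nonempty β] (Q : Measure Ω) [IsProbabilityMeasure Q] {X : Ω → K} {T : Ω → β}

/-- The density with respect to `Q` of the selection law of `c : K → β` (see `selectionLaw`). -/
def selectionDensity (X : Ω → K) (T : Ω → β) (c : K → β) (ω : Ω) : ℝ≥0∞ :=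
  diracDensity (condDistrib T X Q (X ω)) (c (X ω)) (T ω)

/-- The law obtained from `Q` by keeping the law of the label `X` and conditioning on `T = c k`
in each cell `{X = k}`. -/
def selectionLaw (X : Ω → K) (T : Ω → β) (c : K → β) : Measure Ω :=
  Q.withDensity (selectionDensity Q X T c)

theorem measurable_uncurry_selectionDensity (hX : Measurable X) (hT : Measurable T) :
    Measurable (uncurry (selectionDensity Q X T)) := by
  let D (z : (K → β) × K × β) : ℝ≥0∞ := diracDensity (condDistrib T X Q z.2.1) (z.1 z.2.1) z.2.2
  have hD : Measurable D := .of_discrete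
  exact hD.comp (measurable_fst.prodMk ((hX.prodMk hT).comp measurable_snd))

theorem measurable_selectionDensity (hX : Measurable X) (hT : Measurable T) (c : K → β) :
    Measurable (selectionDensity Q X T c) :=
  (measurable_uncurry_selectionDensity Q hX hT).of_uncurry_left

theorem selectionLaw_ae_eq (hX : Measurable X) (hT : Measurable T) (c : K → β) :
    T =ᵐ[selectionLaw Q X T c] c ∘ X := by
  refine (ae_withDensity_iff (measurable_selectionDensity Q hX hT c)).2 (.of_forall fun ω hω => ?_)
  rw [selectionDensity, diracDensity] at hω
  exact Set.mem_singleton_iff.1 (Set.mem_of_indicator_ne_zero hω)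

theorem ae_condDistrib_singleton_ne_zero (hX : Measurable X) (hT : Measurable T) :
    ∀ᵐ ω ∂Q, condDistrib T X Q (X ω) {T ω} ≠ 0 := by
  have hae : ∀ᵐ z ∂(Q.map X) ⊗ₘ condDistrib T X Q, condDistrib T X Q z.1 {z.2} ≠ 0 :=
    ae_compProd_of_ae_ae (Set.to_countable _).measurableSet
      (.of_forall fun k => ae_iff_of_countable.2 fun _ => id)
  rw [compProd_map_condDistrib hT.aemeasurable] at hae
  exact ae_of_ae_map (hX.prodMk hT).aemeasurable hae

theorem isProbabilityMeasure_selectionLaw (hX : Measurable X) (hT : Measurable T) {c : K → β}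
    (hc : ∀ k, condDistrib T X Q k {c k} ≠ 0) : IsProbabilityMeasure (selectionLaw Q X T c) := by
  let D (z : K × β) : ℝ≥0∞ := diracDensity (condDistrib T X Q z.1) (c z.1) z.2
  have hD : Measurable D := .of_discrete
  have : IsProbabilityMeasure (Q.map X) := isProbabilityMeasure_map hX.aemeasurable
  refine ⟨?_⟩
  calc selectionLaw Q X T c Set.univ
      = ∫⁻ ω, D (X ω, T ω) ∂Q := by
        rw [selectionLaw, withDensity_apply _ .univ, restrict_univ]; rfl
    _ = ∫⁻ k, ∫⁻ t, D (k, t) ∂condDistrib T X Q k ∂Q.map X := by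
        rw [← lintegral_map hD (hX.prodMk hT), ← compProd_map_condDistrib hT.aemeasurable,
          lintegral_compProd hD]
    _ = ∫⁻ _, 1 ∂Q.map X := lintegral_congr fun k => lintegral_diracDensity _ (hc k)
    _ = 1 := by simp

end SelectionLaw

section Averaging

variable {Ω K β ι : Type*} [MeasurableSpace Ω] [Fintype K] [MeasurableSpace K]
  [MeasurableSingletonClass K] [MeasurableSpace β] [Countable β] [MeasurableSingletonClass β]
  [Nonempty β] [Fintype ι] (Q : Measure Ω) [IsProbabilityMeasure Q] {X : Ω → K} {T : Ω → β}

theorem ae_isProbabilityMeasure_selectionLaw (hX : Measurable X) (hT : Measurable T) :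
    ∀ᵐ c ∂Measure.pi fun k => condDistrib T X Q k,
      IsProbabilityMeasure (selectionLaw Q X T c) := by
  have hpos (k : K) := (tendsto_eval_ae_ae (μ := fun k => condDistrib T X Q k) (i := k)).eventually
    (ae_iff_of_countable.2 fun _ => id)
  filter_upwards [ae_all_iff.2 hpos] with c hc
  exact isProbabilityMeasure_selectionLaw Q hX hT hc

theorem ae_lintegral_prod_selectionDensity (hX : Measurable X) (hT : Measurable T) :
    ∀ᵐ x ∂Measure.pi fun _ : ι => Q, (Injective fun i => X (x i)) →
      ∫⁻ c, ∏ i, selectionDensity Q X T c (x i) ∂Measure.pi (fun k => condDistrib T X Q k) = 1 := by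
  have hpos (i : ι) := (tendsto_eval_ae_ae (μ := fun _ => Q) (i := i)).eventually
    (ae_condDistrib_singleton_ne_zero Q hX hT)
  filter_upwards [ae_all_iff.2 hpos] with x hx hinj
  exact lintegral_pi_prod_diracDensity _ hinj hx

theorem lintegral_setLIntegral_pi_selectionLaw (hX : Measurable X) (hT : Measurable T)
    {f : (ι → Ω) → ℝ≥0∞} (hf : Measurable f) :
    ∫⁻ c, ∫⁻ x in {x | Injective fun i => X (x i)}, f x ∂Measure.pi (fun _ => selectionLaw Q X T c)
        ∂Measure.pi (fun k => condDistrib T X Q k) =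
      ∫⁻ x in {x | Injective fun i => X (x i)}, f x ∂Measure.pi fun _ => Q := by
  set S : Set (ι → Ω) := {x | Injective fun i => X (x i)}
  have hS : MeasurableSet S := by
    have hlabels : Measurable fun (x : ι → Ω) i => X (x i) :=
      measurable_pi_lambda _ fun i => hX.comp (measurable_pi_apply i)
    exact hlabels (Set.toFinite {k : ι → K | Injective k}).measurableSet
  let D (c : K → β) (x : ι → Ω) : ℝ≥0∞ := ∏ i, selectionDensity Q X T c (x i)
  have hD : Measurable (uncurry D) :=
    Finset.measurable_prod _ fun i _ => (measurable_uncurry_selectionDensity Q hX hT).comp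
      (measurable_fst.prodMk ((measurable_pi_apply i).comp measurable_snd))
  calc ∫⁻ c, ∫⁻ x in S, f x ∂Measure.pi (fun _ => selectionLaw Q X T c)
        ∂Measure.pi (fun k => condDistrib T X Q k)
      = ∫⁻ c, ∫⁻ x in S, D c x * f x ∂Measure.pi (fun _ => Q)
          ∂Measure.pi (fun k => condDistrib T X Q k) := by
        refine lintegral_congr_ae ?_
        filter_upwards [ae_isProbabilityMeasure_selectionLaw Q hX hT] with c hc
        unfold selectionLaw at hc ⊢
        rw [pi_withDensity _ fun _ => measurable_selectionDensity Q hX hT c]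
        exact setLIntegral_withDensity_eq_setLIntegral_mul _ hD.of_uncurry_left hf hS
    _ = ∫⁻ x in S, (∫⁻ c, D c x ∂Measure.pi (fun k => condDistrib T X Q k)) * f x
          ∂Measure.pi (fun _ => Q) := by
        rw [lintegral_lintegral_swap (hD.mul (hf.comp measurable_snd)).aemeasurable]
        exact lintegral_congr fun x => lintegral_mul_const _ hD.of_uncurry_right
    _ = ∫⁻ x in S, f x ∂Measure.pi fun _ => Q := by
        refine setLIntegral_congr_fun_ae hS ?_
        filter_upwards [ae_lintegral_prod_selectionDensity Q hX hT] with x hx hxS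
        rw [hx hxS, one_mul]

end Averaging

section Separation

theorem setLIntegral_injective_pi_le {Ω K β ι : Type*} [MeasurableSpace Ω] [Finite K]
    [MeasurableSpace K] [MeasurableSingletonClass K] [MeasurableSpace β] [Countable β]
    [MeasurableSingletonClass β] [Nonempty β] [Fintype ι] (Q : Measure Ω) [IsProbabilityMeasure Q]
    {X : Ω → K} {T : Ω → β} (hX : Measurable X) (hT : Measurable T)
    {f : (ι → Ω) → ℝ≥0∞} (hf : Measurable f) {a : ℝ≥0∞}
    (hfa : ∀ c, IsProbabilityMeasure (selectionLaw Q X T c) →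
      ∫⁻ x, f x ∂Measure.pi (fun _ => selectionLaw Q X T c) ≤ a) :
    ∫⁻ x in {x | Injective fun i => X (x i)}, f x ∂Measure.pi (fun _ => Q) ≤ a := by
  have := Fintype.ofFinite K
  rw [← lintegral_setLIntegral_pi_selectionLaw Q hX hT hf]
  refine (lintegral_mono_ae (g := fun _ => a) ?_).trans_eq (by simp)
  filter_upwards [ae_isProbabilityMeasure_selectionLaw Q hX hT] with c hc
  exact (setLIntegral_le_lintegral _ _).trans (hfa c hc)

theorem injective_iff_exists_injective_fin {ι α : Type*} [Finite ι] (u : ι → ℕ → α) :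
    Injective u ↔ ∃ m, Injective fun i (l : Fin m) => u i l := by
  refine ⟨fun hu => ?_, fun ⟨m, hm⟩ i j hij => hm (by simp only [hij])⟩
  have hsep (i j : ι) : ∀ᶠ m in atTop, (∀ l : Fin m, u i l = u j l) → i = j := by
    by_cases hij : u i = u j
    · exact .of_forall fun _ _ => hu hij
    · obtain ⟨l, hl⟩ := Function.ne_iff.1 hij
      filter_upwards [eventually_gt_atTop l] with m hm heq using absurd (heq ⟨l, hm⟩) hl
  obtain ⟨m, hm⟩ := (eventually_all.2 fun i => eventually_all.2 (hsep i)).exists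
  exact ⟨m, fun i j hij => hm i j (congr_fun hij)⟩

theorem monotone_setOf_injective_fin {Ω ι α : Type*} (U : Ω → ℕ → α) :
    Monotone fun m => {x : ι → Ω | Injective fun i (l : Fin m) => U (x i) l} := by
  intro m m' hmm' x hx i j hij
  exact hx (funext fun l => congr_fun hij (l.castLE hmm'))

theorem lintegral_pi_le_of_forall_ae_eq_comp {Ω α β ι : Type*} [MeasurableSpace Ω]
    [MeasurableSpace α] [MeasurableSpace.CountablySeparated α] [MeasurableSpace β] [Countable β]
    [MeasurableSingletonClass β] [Fintype ι] (Q : Measure Ω) [IsProbabilityMeasure Q]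
    {X : Ω → α} (hX : Measurable X) [NullSingletonClass (Q.map X)] {T : Ω → β} (hT : Measurable T)
    {f : (ι → Ω) → ℝ≥0∞} (hf : Measurable f) {a : ℝ≥0∞}
    (hfa : ∀ P : Measure Ω, IsProbabilityMeasure P → P ≪ Q →
      (∃ g, Measurable g ∧ T =ᵐ[P] g ∘ X) → ∫⁻ x, f x ∂Measure.pi (fun _ => P) ≤ a) :
    ∫⁻ x, f x ∂Measure.pi (fun _ => Q) ≤ a := by
  have : MeasurableEq α := measurableEq_of_countablySeparated α
  have : Nonempty β := Q.nonempty_of_neZero.map T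
  obtain ⟨u, hu, hu_inj⟩ := MeasurableSpace.measurable_injection_nat_bool_of_countablySeparated α
  let S (m : ℕ) : Set (ι → Ω) := {x | Injective fun i (l : Fin m) => u (X (x i)) l}
  have hS : (⋃ m, S m) =ᵐ[Measure.pi fun _ => Q] Set.univ := by
    refine eventuallyEq_univ.2 ?_
    filter_upwards [ae_injective_comp_pi Q hX] with x hx
    exact Set.mem_iUnion.2 ((injective_iff_exists_injective_fin _).1 (hu_inj.comp hx))
  rw [← setLIntegral_univ, ← setLIntegral_congr hS,
    setLIntegral_iUnion_of_directed f (monotone_setOf_injective_fin fun ω => u (X ω)).directed_le]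
  refine iSup_le fun m => ?_
  have hum : Measurable fun (y : α) (l : Fin m) => u y l :=
    measurable_pi_lambda _ fun l => (measurable_pi_apply (l : ℕ)).comp hu
  refine setLIntegral_injective_pi_le Q (hum.comp hX) hT hf fun c hc => ?_
  exact hfa _ hc (withDensity_absolutelyContinuous _ _)
    ⟨_, Measurable.of_discrete.comp hum, selectionLaw_ae_eq Q (hum.comp hX) hT c⟩

theorem no_free_lunch_finite_sample_general {Ω α β ι : Type*} [MeasurableSpace Ω]
    [MeasurableSpace α] [MeasurableSpace.CountablySeparated α] [MeasurableSpace β] [Countable β]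
    [MeasurableSingletonClass β] [Fintype ι] (Q : Measure Ω) [IsProbabilityMeasure Q]
    {X : Ω → α} (hX : Measurable X) [NullSingletonClass (Q.map X)] {T : Ω → β} (hT : Measurable T)
    {ψ : (ι → Ω) → ℝ} (hψ_meas : Measurable ψ) (hψ_range : ∀ x, ψ x ∈ Set.Icc 0 1)
    {a : ℝ} (ha : 0 ≤ a)
    (hlevel : ∀ P : Measure Ω, IsProbabilityMeasure P → P ≪ Q →
      (∃ g, Measurable g ∧ T =ᵐ[P] g ∘ X) → ∫ x, ψ x ∂Measure.pi (fun _ => P) ≤ a) :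
    ∫ x, ψ x ∂Measure.pi (fun _ => Q) ≤ a := by
  have hiff (P : Measure Ω) [IsProbabilityMeasure P] :
      ∫ x, ψ x ∂Measure.pi (fun _ => P) ≤ a ↔
        ∫⁻ x, ENNReal.ofReal (ψ x) ∂Measure.pi (fun _ => P) ≤ ENNReal.ofReal a := by
    rw [← ofReal_integral_eq_lintegral_ofReal
      (.of_mem_Icc 0 1 hψ_meas.aemeasurable (.of_forall hψ_range))
      (.of_forall fun x => (hψ_range x).1), ENNReal.ofReal_le_ofReal_iff ha]
  exact (hiff Q).2 (lintegral_pi_le_of_forall_ae_eq_comp Q hX hT hψ_meas.ennreal_ofReal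
    fun P hP hPQ hPT => (hiff P).1 (hlevel P hP hPQ hPT))

end Separation

section StrongIgnorability

theorem condIndepFun_of_ae_eq_measurable_right {Ω β γ : Type*} {m mΩ : MeasurableSpace Ω}
    [StandardBorelSpace Ω] (hm : m ≤ mΩ) {P : Measure Ω} [IsFiniteMeasure P] [MeasurableSpace β]
    [MeasurableSpace γ] {Y : Ω → β} (hY : Measurable Y) {T G : Ω → γ} (hG : Measurable[m] G)
    (hTG : T =ᵐ[P] G) : CondIndepFun m hm Y T P := by
  refine Kernel.IndepFun.congr' (condIndepFun_of_measurable_right (hm' := hm) hY hG)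
    (.of_forall fun _ => ae_eq_refl _) (ae_ae_of_ae_comp ?_)
  rw [condExpKernel_comp_trim]
  exact hTG.symm

variable {p : ℕ} {P Q : ProbabilityMeasure (FullData p)}

theorem memE.nullSingletonClass_map_Xc (hQ : memE Q) :
    NullSingletonClass ((Q : Measure (FullData p)).map Xc) := by
  obtain ⟨⟨j, hj⟩, -⟩ := hQ
  have hlaw : ((Q : Measure (FullData p)).map Xc).map (eval j) ≪ volume := by
    rwa [map_map (measurable_pi_apply j) measurable_Xc]
  refine ⟨fun x => measure_mono_null (t := eval j ⁻¹' {x j}) (by simp) ?_⟩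
  rw [← map_apply (measurable_pi_apply j) (measurableSet_singleton (x j))]
  exact hlaw (measure_singleton (x j))

theorem measurable_Y1c : Measurable (Y1c (p := p)) := measurable_snd.fst

theorem measurable_Y0c : Measurable (Y0c (p := p)) := measurable_snd.snd.fst

theorem measurable_Tc : Measurable (Tc (p := p)) := measurable_snd.snd.snd

theorem memE.of_absolutelyContinuous (hQ : memE Q) (hPQ : (P : Measure (FullData p)) ≪ Q) :
    memE P := by
  obtain ⟨⟨j, hj⟩, h1, h0⟩ := hQ
  exact ⟨⟨j, (hPQ.map ((measurable_pi_apply j).comp measurable_Xc)).trans hj⟩,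
    fun y => hPQ.map measurable_Y1c (h1 y), fun y => hPQ.map measurable_Y0c (h0 y)⟩

theorem memE.memPSI_of_ae_eq_comp (hP : memE P)
    (hT : ∃ g, Measurable g ∧ Tc =ᵐ[(P : Measure (FullData p))] g ∘ Xc) : memPSI P := by
  obtain ⟨g, hg, hTg⟩ := hT
  exact ⟨hP, condIndepFun_of_ae_eq_measurable_right _ (measurable_Y1c.prodMk measurable_Y0c)
    (hg.comp (comap_measurable Xc)) hTg⟩

end StrongIgnorability

/-- If a measurable randomized test `ψ_n : D^n → [0,1]` satisfies
`sup_{P ∈ P_SI} E_P[ψ_n] ≤ α` for some `α ∈ (0,1)`, then `sup_{Q ∈ E} E_Q[ψ_n] ≤ α`. -/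
theorem no_free_lunch_finite_sample {p : ℕ} (n : ℕ)
    (ψ : (Fin n → FullData p) → ℝ) (hψ_meas : Measurable ψ)
    (hψ_range : ∀ x, ψ x ∈ Set.Icc (0 : ℝ) 1)
    (α : ℝ) (hα : α ∈ Set.Ioo (0 : ℝ) 1)
    (hlevel : ∀ P : ProbabilityMeasure (FullData p), memPSI P → testExp n ψ P ≤ α) :
    ∀ Q : ProbabilityMeasure (FullData p), memE Q → testExp n ψ Q ≤ α := by
  intro Q hQ
  have := hQ.nullSingletonClass_map_Xc
  exact no_free_lunch_finite_sample_general _ measurable_Xc measurable_Tc hψ_meas hψ_range hα.1.le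
    fun P hP hPQ hPT => hlevel ⟨P, hP⟩
      ((hQ.of_absolutelyContinuous (P := ⟨P, hP⟩) hPQ).memPSI_of_ae_eq_comp hPT)

end
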